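/- Order both ℝ⋊_1ℝ and ℝ⋊_{−1}ℝ lexicographically with the second coordinate first, i.e., (x₁,y₁) < (x₂,y₂) iff y₁ < y₂, or y₁ = y₂ and x₁ < x₂. Then there is no map φ : ℝ⋊_1ℝ → ℝ⋊_{−1}ℝ that is simultaneously a group isomorphism and strictly order-preserving; that is, ℝ⋊_1ℝ and ℝ⋊_{−1}ℝ are not isomorphic as ordered groups. -/

import Mathlib

/-!
Write `e = exp 1`. In `ℝ⋊_1ℝ`, conjugation by `(0, 1)` sends `(a, 0)` to `(e a, 0)`, so every element
of `ℝ × {0}` is a commutator, and a homomorphism `φ` sends it into `ℝ × {0}` again because the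
second coordinate is a homomorphism to an abelian group. If `φ` also preserves the order, then
`φ (0, 1) = (u, s)` with `s ≥ 0`, and conjugation by it in `ℝ⋊_{-1}ℝ` scales `ℝ × {0}` by
`exp (-s) ≤ 1`. Hence `φ (e, 0) ≤ φ (1, 0)`, although `(1, 0) < (e, 0)`.
-/

/-- The group operation of ℝ⋊_cℝ : (x₁,y₁)·(x₂,y₂) = (x₁+e^{c y₁}x₂, y₁+y₂). -/
noncomputable def sdMul (c : ℝ) (p q : ℝ × ℝ) : ℝ × ℝ :=
  (p.1 + Real.exp (c * p.2) * q.1, p.2 + q.2)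

/-- The lexicographic order on ℝ² with the second coordinate first. -/
def lexLt2 (p q : ℝ × ℝ) : Prop := p.2 < q.2 ∨ (p.2 = q.2 ∧ p.1 < q.1)

theorem sd_one_not_ordered_iso_sd_neg_one :
    ¬ ∃ φ : ℝ × ℝ → ℝ × ℝ,
      Function.Bijective φ ∧
      (∀ p q : ℝ × ℝ, φ (sdMul 1 p q) = sdMul (-1) (φ p) (φ q)) ∧
      (∀ p q : ℝ × ℝ, lexLt2 p q → lexLt2 (φ p) (φ q)) := by
  rintro ⟨φ, -, hmul, hlt⟩
  set e := Real.exp 1 with he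
  have he1 : 1 < e := Real.one_lt_exp_iff.mpr one_pos
  have h0 : φ (0, 0) = (0, 0) := by
    have h := hmul (0, 0) (0, 0)
    simp only [sdMul, mul_zero, add_zero] at h
    have h2 : (φ (0, 0)).2 = 0 := by
      have := congrArg Prod.snd h
      simp only at this
      linarith
    have h1 : (φ (0, 0)).1 = 0 := by
      have := congrArg Prod.fst h
      simp only [h2, mul_zero, Real.exp_zero] at this
      linarith
    exact Prod.ext h1 h2
  -- `(0, 1) · (a, 0) = (e a, 0) · (0, 1)`, transported by `φ`
  have hconj (a : ℝ) : sdMul (-1) (φ (0, 1)) (φ (a, 0)) = sdMul (-1) (φ (e * a, 0)) (φ (0, 1)) := by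
    rw [← hmul, ← hmul]
    simp [sdMul, he]
  have hsnd_conj (a : ℝ) : (φ (e * a, 0)).2 = (φ (a, 0)).2 := by
    have := congrArg Prod.snd (hconj a)
    simp only [sdMul] at this
    linarith
  have hsnd (b : ℝ) : (φ (b, 0)).2 = 0 := by
    -- `b = e a - a` for `a = b / (e - 1)`
    have hne : e - 1 ≠ 0 := by linarith
    have hb : e * (b / (e - 1)) = b + b / (e - 1) := by
      field_simp
      ring
    have h := congrArg Prod.snd (hmul (b, 0) (b / (e - 1), 0))
    simp only [sdMul, mul_zero, Real.exp_zero, one_mul, add_zero] at h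
    rw [← hb, hsnd_conj] at h
    linarith
  have hs : 0 ≤ (φ (0, 1)).2 := by
    have h := hlt (0, 0) (0, 1) (Or.inl one_pos)
    rw [h0] at h
    rcases h with h | ⟨h, -⟩
    exacts [h.le, h.le]
  have hmono {a b : ℝ} (hab : a < b) : (φ (a, 0)).1 < (φ (b, 0)).1 := by
    rcases hlt (a, 0) (b, 0) (Or.inr ⟨rfl, hab⟩) with h | ⟨-, h⟩
    · simp [hsnd] at h
    · exact h
  have hpos : 0 < (φ (1, 0)).1 := by
    simpa [h0] using hmono one_pos
  have hscale : (φ (e, 0)).1 = Real.exp (-(φ (0, 1)).2) * (φ (1, 0)).1 := by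
    have h := congrArg Prod.fst (hconj 1)
    simp only [sdMul, hsnd, mul_one, mul_zero, Real.exp_zero, one_mul, neg_mul] at h
    linarith
  have hexp : Real.exp (-(φ (0, 1)).2) ≤ 1 := Real.exp_le_one_iff.mpr (by linarith)
  have := hmono he1
  nlinarith
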